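/- arXiv:2210.03009 — 2 statements merged into one kernel-verified Lean document; each statement's English description precedes it below -/
import Mathlib

section
/- For every Λ > 0 and every x₀ ≥ 0, both one-sided limits A₁ = lim_{(x,y)→(x₀,x₀), 0 ≤ x < y} ρ̄_Λ(x, y) and A₂ = lim_{(x,y)→(x₀,x₀), 0 ≤ y < x} ρ̄_Λ(x, y) exist, and their difference is the constant A₁ − A₂ = −1/2, independent of x₀, of Λ, and of the cutoff φ. -/
open MeasureTheory Topology Filter

/-- The one-dimensional heat kernel `h_t(u) = (4πt)^(−1/2) · exp(−u²/(4t))`. -/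
noncomputable def heat (t u : ℝ) : ℝ :=
  (Real.sqrt (4 * Real.pi * t))⁻¹ * Real.exp (-(u ^ 2) / (4 * t))

/-- The `u`-derivative of the heat kernel, `h_t′(u) = −(u/(2t)) · h_t(u)`. -/
noncomputable def heat' (t u : ℝ) : ℝ := -(u / (2 * t)) * heat t u

/-- `(φh_t)′(u) = φ′(u)·h_t(u) + φ(u)·h_t′(u)`. -/
noncomputable def phiHeat' (φ : ℝ → ℝ) (t u : ℝ) : ℝ :=
  deriv φ u * heat t u + φ u * heat' t u

/-- The scalar propagator kernel
`ρ_{ε,Λ}(x, y) = −(1/2) ∫_ε^Λ [(φh_t)′(x − y) + (φh_t)′(x + y)] dt`. -/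
noncomputable def rho (φ : ℝ → ℝ) (ε Λ x y : ℝ) : ℝ :=
  -(1 / 2) * ∫ t in ε..Λ, (phiHeat' φ t (x - y) + phiHeat' φ t (x + y))

/-- `ρ̄_Λ(x, y) = lim_{ε→0⁺} ρ_{ε,Λ}(x, y)` (whenever the limit exists). -/
noncomputable def rhoBar (φ : ℝ → ℝ) (Λ x y : ℝ) : ℝ :=
  limUnder (𝓝[>] (0 : ℝ)) (fun ε => rho φ ε Λ x y)

noncomputable def GG (s : ℝ) : ℝ := (Real.sqrt Real.pi)⁻¹ * ∫ r in (0:ℝ)..s, Real.exp (-1 * r ^ 2)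

lemma GG_deriv (s : ℝ) : HasDerivAt GG ((Real.sqrt Real.pi)⁻¹ * Real.exp (-1 * s ^ 2)) s := by
  have hc : Continuous (fun r : ℝ => Real.exp (-1 * r ^ 2)) := by fun_prop
  exact ((hc.integral_hasStrictDerivAt 0 s).hasDerivAt).const_mul _

lemma GG_cont : Continuous GG :=
  continuous_iff_continuousAt.2 fun s => (GG_deriv s).continuousAt

lemma GG_zero : GG 0 = 0 := by simp [GG]

lemma GG_neg (s : ℝ) : GG (-s) = - GG s := by
  unfold GG
  have h := intervalIntegral.integral_comp_neg (a := 0) (b := s) (fun r : ℝ => Real.exp (-1 * r ^ 2))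
  simp only [neg_sq, neg_zero] at h
  rw [h, intervalIntegral.integral_symm]
  ring

lemma GG_top : Tendsto GG atTop (𝓝 (1 / 2)) := by
  have hi : Integrable (fun r : ℝ => Real.exp (-1 * r ^ 2)) := integrable_exp_neg_mul_sq one_pos
  have h := intervalIntegral_tendsto_integral_Ioi 0 hi.integrableOn
    (tendsto_id (α := ℝ) (x := atTop))
  rw [integral_gaussian_Ioi] at h
  have h2 := h.const_mul (Real.sqrt Real.pi)⁻¹
  have e : (Real.sqrt Real.pi)⁻¹ * (Real.sqrt (Real.pi / 1) / 2) = 1 / 2 := by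
    have : Real.sqrt Real.pi ≠ 0 := (Real.sqrt_pos.2 Real.pi_pos).ne'
    rw [div_one]; field_simp
  rw [e] at h2
  exact h2

lemma J_deriv (u t : ℝ) (ht : 0 < t) :
    HasDerivAt (fun t => GG (u / (2 * Real.sqrt t))) (heat' t u) t := by
  have hs : 0 < Real.sqrt t := Real.sqrt_pos.2 ht
  have h1 : HasDerivAt (fun t => u / (2 * Real.sqrt t))
      ((0 * (2 * Real.sqrt t) - u * (2 * (1 / (2 * Real.sqrt t)))) / (2 * Real.sqrt t) ^ 2) t :=
    (hasDerivAt_const t u).div ((Real.hasDerivAt_sqrt ht.ne').const_mul 2) (by positivity)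
  have h2 := (GG_deriv (u / (2 * Real.sqrt t))).comp t h1
  refine h2.congr_deriv (Eq.symm ?_)
  have hp : 0 < Real.sqrt Real.pi := Real.sqrt_pos.2 Real.pi_pos
  have e1 : Real.sqrt (4 * Real.pi * t) = 2 * Real.sqrt Real.pi * Real.sqrt t := by
    rw [Real.sqrt_mul (by positivity), Real.sqrt_mul (by norm_num)]
    congr 2
    rw [show (4:ℝ) = 2 ^ 2 by norm_num]; exact Real.sqrt_sq (by norm_num)
  have e2 : -1 * (u / (2 * Real.sqrt t)) ^ 2 = -(u ^ 2) / (4 * t) := by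
    rw [div_pow, mul_pow, Real.sq_sqrt ht.le]; field_simp; norm_num
  unfold heat' heat
  rw [e1, e2, mul_pow, Real.sq_sqrt ht.le]
  field_simp
  norm_num

lemma heat_contOn (u : ℝ) : ContinuousOn (fun t => heat t u) (Set.Ioi 0) := by
  unfold heat
  have hpi := Real.pi_pos
  apply ContinuousOn.mul
  · apply ContinuousOn.inv₀ (by fun_prop)
    intro t ht
    have : 0 < t := ht
    positivity
  · apply Real.continuous_exp.comp_continuousOn
    apply ContinuousOn.div (by fun_prop) (by fun_prop)
    intro t ht
    have : 0 < t := ht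
    positivity

lemma heat'_contOn (u : ℝ) : ContinuousOn (fun t => heat' t u) (Set.Ioi 0) := by
  unfold heat'
  refine ContinuousOn.mul (ContinuousOn.neg (ContinuousOn.div (by fun_prop) (by fun_prop) ?_)) (heat_contOn u)
  intro t ht
  have : 0 < t := ht
  positivity

lemma sub_Ioi {a b : ℝ} (ha : 0 < a) (hb : 0 < b) : Set.uIcc a b ⊆ Set.Ioi 0 := fun t ht =>
  lt_of_lt_of_le (lt_min ha hb) ht.1

lemma heat_ii (u : ℝ) {a b : ℝ} (ha : 0 < a) (hb : 0 < b) :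
    IntervalIntegrable (fun t => heat t u) volume a b :=
  ((heat_contOn u).mono (sub_Ioi ha hb)).intervalIntegrable

lemma heat'_ii (u : ℝ) {a b : ℝ} (ha : 0 < a) (hb : 0 < b) :
    IntervalIntegrable (fun t => heat' t u) volume a b :=
  ((heat'_contOn u).mono (sub_Ioi ha hb)).intervalIntegrable

lemma J_eq (u : ℝ) {a b : ℝ} (ha : 0 < a) (hb : 0 < b) :
    ∫ t in a..b, heat' t u = GG (u / (2 * Real.sqrt b)) - GG (u / (2 * Real.sqrt a)) :=
  intervalIntegral.integral_eq_sub_of_hasDerivAt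
    (fun t ht => J_deriv u t (sub_Ioi ha hb ht)) (heat'_ii u ha hb)

lemma aux_top {u : ℝ} (hu : 0 < u) :
    Tendsto (fun a => GG (u / (2 * Real.sqrt a))) (𝓝[>] 0) (𝓝 (1 / 2)) := by
  apply GG_top.comp
  have h : Tendsto (fun a => 2 * Real.sqrt a) (𝓝[>] 0) (𝓝[>] 0) := by
    apply tendsto_nhdsWithin_iff.2 ⟨?_, ?_⟩
    · have : Continuous (fun a => 2 * Real.sqrt a) := by fun_prop
      have := this.tendsto 0
      simp only [Real.sqrt_zero, mul_zero] at this
      exact this.mono_left nhdsWithin_le_nhds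
    · filter_upwards [self_mem_nhdsWithin] with a ha
      have : 0 < Real.sqrt a := Real.sqrt_pos.2 ha
      show 0 < 2 * Real.sqrt a
      positivity
  have := (tendsto_inv_nhdsGT_zero.comp h).const_mul_atTop hu
  exact this

lemma aux_sign (u : ℝ) :
    Tendsto (fun a => GG (u / (2 * Real.sqrt a))) (𝓝[>] 0) (𝓝 (Real.sign u / 2)) := by
  rcases lt_trichotomy u 0 with h | h | h
  · rw [Real.sign_of_neg h]
    have := (aux_top (neg_pos.2 h)).neg
    simp only [neg_div, GG_neg, neg_neg] at this ⊢
    exact this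
  · subst h
    simp [GG_zero]
  · rw [Real.sign_of_pos h]; exact aux_top h

noncomputable def HH (Λ u : ℝ) : ℝ := ∫ t in (0:ℝ)..Λ, heat t u

lemma bound_ii (b : ℝ) (hb : 0 < b) :
    IntervalIntegrable (fun t => (Real.sqrt (4 * Real.pi * t))⁻¹) volume 0 b := by
  have h := (intervalIntegral.intervalIntegrable_rpow' (a := 0) (b := b) (r := -(1/2)) (by norm_num)).const_mul
    (Real.sqrt (4 * Real.pi))⁻¹
  refine h.congr (fun t ht => ?_)
  rw [Set.uIoc_of_le hb.le] at ht
  have hpi := Real.pi_pos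
  rw [Real.sqrt_mul (show (0:ℝ) ≤ 4 * Real.pi by positivity) t, mul_inv, Real.rpow_neg ht.1.le, ← Real.sqrt_eq_rpow]

lemma heat_meas (u : ℝ) : Measurable (fun t => heat t u) := by
  unfold heat
  fun_prop

lemma heat_bound (t u : ℝ) (ht : 0 < t) : ‖heat t u‖ ≤ (Real.sqrt (4 * Real.pi * t))⁻¹ := by
  unfold heat
  rw [Real.norm_of_nonneg (by positivity)]
  apply mul_le_of_le_one_right (by positivity)
  rw [Real.exp_le_one_iff, neg_div]
  have : 0 ≤ u ^ 2 / (4 * t) := by positivity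
  linarith

lemma HH_cont (Λ : ℝ) (hΛ : 0 < Λ) : Continuous (HH Λ) := by
  unfold HH
  refine intervalIntegral.continuous_of_dominated_interval
    (F := fun u t => heat t u) (bound := fun t => (Real.sqrt (4 * Real.pi * t))⁻¹)
    (fun u => (heat_meas u).aestronglyMeasurable) (fun u => ?_) (bound_ii Λ hΛ) ?_
  · refine Eventually.of_forall fun t ht => ?_
    rw [Set.uIoc_of_le hΛ.le] at ht
    exact heat_bound t u ht.1
  · refine Eventually.of_forall fun t ht => ?_
    unfold heat
    fun_prop

lemma heat_ii0 (u : ℝ) {Λ : ℝ} (hΛ : 0 < Λ) :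
    IntervalIntegrable (fun t => heat t u) volume 0 Λ := by
  refine (bound_ii Λ hΛ).mono_fun' (heat_meas u).aestronglyMeasurable ?_
  refine (ae_restrict_iff' measurableSet_uIoc).2 (Eventually.of_forall fun t ht => ?_)
  rw [Set.uIoc_of_le hΛ.le] at ht
  exact heat_bound t u ht.1

lemma HH_lim (u : ℝ) {Λ : ℝ} (hΛ : 0 < Λ) :
    Tendsto (fun ε => ∫ t in ε..Λ, heat t u) (𝓝[>] 0) (𝓝 (HH Λ u)) := by
  have h := intervalIntegral.continuousOn_primitive_interval_left (f := fun t => heat t u)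
    (μ := volume) (a := 0) (b := Λ)
    ((intervalIntegrable_iff' (μ := volume)).1 (heat_ii0 u hΛ))
  have h2 := h 0 Set.left_mem_uIcc
  refine h2.tendsto.mono_left ?_
  rw [Set.uIcc_of_le hΛ.le]
  rw [nhdsWithin_Icc_eq_nhdsGE hΛ]
  exact nhdsWithin_mono _ Set.Ioi_subset_Ici_self

noncomputable def KK (φ : ℝ → ℝ) (Λ u c : ℝ) : ℝ :=
  deriv φ u * HH Λ u + φ u * (GG (u / (2 * Real.sqrt Λ)) - c / 2)

lemma KK_lim (φ : ℝ → ℝ) {Λ : ℝ} (hΛ : 0 < Λ) (u : ℝ) :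
    Tendsto (fun ε => ∫ t in ε..Λ, phiHeat' φ t u) (𝓝[>] 0) (𝓝 (KK φ Λ u (Real.sign u))) := by
  have h := ((HH_lim u hΛ).const_mul (deriv φ u)).add
    (((aux_sign u).const_sub (GG (u / (2 * Real.sqrt Λ)))).const_mul (φ u))
  refine h.congr' ?_
  filter_upwards [self_mem_nhdsWithin] with ε hε
  have hε : 0 < ε := hε
  unfold phiHeat'
  rw [intervalIntegral.integral_add ((heat_ii u hε hΛ).const_mul _) ((heat'_ii u hε hΛ).const_mul _),
    intervalIntegral.integral_const_mul, intervalIntegral.integral_const_mul, J_eq u hε hΛ]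

lemma phiHeat'_ii (φ : ℝ → ℝ) (u : ℝ) {a b : ℝ} (ha : 0 < a) (hb : 0 < b) :
    IntervalIntegrable (fun t => phiHeat' φ t u) volume a b :=
  ((heat_ii u ha hb).const_mul _).add ((heat'_ii u ha hb).const_mul _)

lemma rhoBar_eq (φ : ℝ → ℝ) {Λ : ℝ} (hΛ : 0 < Λ) (x y : ℝ) :
    rhoBar φ Λ x y =
      -(1 / 2) * (KK φ Λ (x - y) (Real.sign (x - y)) + KK φ Λ (x + y) (Real.sign (x + y))) := by
  apply Tendsto.limUnder_eq
  refine (((KK_lim φ hΛ (x - y)).add (KK_lim φ hΛ (x + y))).const_mul (-(1/2))).congr' ?_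
  filter_upwards [self_mem_nhdsWithin] with ε hε
  unfold rho
  rw [intervalIntegral.integral_add (phiHeat'_ii φ _ hε hΛ) (phiHeat'_ii φ _ hε hΛ)]

lemma KK_cont (φ : ℝ → ℝ) (hφ : ContDiff ℝ (⊤ : ℕ∞) φ) {Λ : ℝ} (hΛ : 0 < Λ) (c : ℝ) :
    Continuous (fun u => KK φ Λ u c) := by
  unfold KK
  have h1 : Continuous (deriv φ) := hφ.continuous_deriv (by simp)
  have h2 := hφ.continuous
  have h3 := HH_cont Λ hΛ
  have h4 : Continuous (fun u => GG (u / (2 * Real.sqrt Λ))) := GG_cont.comp (by fun_prop)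
  fun_prop

lemma sector (φ : ℝ → ℝ) (hφ : ContDiff ℝ (⊤ : ℕ∞) φ) {Λ : ℝ} (hΛ : 0 < Λ) (x₀ c : ℝ)
    (S : Set (ℝ × ℝ)) (hS : ∀ p ∈ S, Real.sign (p.1 - p.2) = c ∧ 0 < p.1 + p.2) :
    Tendsto (fun p : ℝ × ℝ => rhoBar φ Λ p.1 p.2) (𝓝[S] (x₀, x₀))
      (𝓝 (-(1 / 2) * (KK φ Λ (x₀ - x₀) c + KK φ Λ (x₀ + x₀) 1))) := by
  have hc : Continuous (fun p : ℝ × ℝ =>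
      -(1 / 2) * (KK φ Λ (p.1 - p.2) c + KK φ Λ (p.1 + p.2) 1)) := by
    have h1 := KK_cont φ hφ hΛ c
    have h2 := KK_cont φ hφ hΛ 1
    have h3 : Continuous (fun p : ℝ × ℝ => KK φ Λ (p.1 - p.2) c) := h1.comp (by fun_prop)
    have h4 : Continuous (fun p : ℝ × ℝ => KK φ Λ (p.1 + p.2) 1) := h2.comp (by fun_prop)
    fun_prop
  refine ((hc.tendsto (x₀, x₀)).mono_left nhdsWithin_le_nhds).congr' ?_
  filter_upwards [self_mem_nhdsWithin] with p hp
  obtain ⟨h1, h2⟩ := hS p hp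
  rw [rhoBar_eq φ hΛ, h1, Real.sign_of_pos h2]

/-- For every `Λ > 0` and `x₀ ≥ 0`, both one-sided limits `A₁, A₂` of `ρ̄_Λ` at
`(x₀, x₀)` from the two sectors exist, and `A₁ − A₂ = −1/2` independently of `x₀`,
`Λ` and the cutoff `φ`. -/
theorem stmt10 (φ : ℝ → ℝ) (hφ : ContDiff ℝ (⊤ : ℕ∞) φ) (hsupp : HasCompactSupport φ)
    (heven : ∀ x, φ (-x) = φ x) (δ : ℝ) (hδ : 0 < δ) (hone : ∀ x, |x| < δ → φ x = 1)
    (Λ : ℝ) (hΛ : 0 < Λ) (x₀ : ℝ) (hx₀ : 0 ≤ x₀) :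
    ∃ A₁ A₂ : ℝ,
      Tendsto (fun p : ℝ × ℝ => rhoBar φ Λ p.1 p.2)
        (𝓝[{p : ℝ × ℝ | 0 ≤ p.1 ∧ p.1 < p.2}] (x₀, x₀)) (𝓝 A₁) ∧
      Tendsto (fun p : ℝ × ℝ => rhoBar φ Λ p.1 p.2)
        (𝓝[{p : ℝ × ℝ | 0 ≤ p.2 ∧ p.2 < p.1}] (x₀, x₀)) (𝓝 A₂) ∧
      A₁ - A₂ = -(1 / 2) := by
  refine ⟨_, _, sector φ hφ hΛ x₀ (-1) _ ?_, sector φ hφ hΛ x₀ 1 _ ?_, ?_⟩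
  · rintro p ⟨h1, h2⟩
    exact ⟨Real.sign_of_neg (by linarith), by linarith⟩
  · rintro p ⟨h1, h2⟩
    exact ⟨Real.sign_of_pos (by linarith), by linarith⟩
  · have h0 : φ 0 = 1 := hone 0 (by simpa using hδ)
    simp only [KK, sub_self, h0]
    ring
end

section
/- For every Λ > 0, the corner values of the extended propagator kernel are: lim_{(x,y)→(0,0), 0 ≤ x < y} ρ̄_Λ(x, y) = 0 and lim_{(x,y)→(0,0), 0 ≤ y < x} ρ̄_Λ(x, y) = 1/2; both limits exist and are independent of Λ and of the cutoff φ. -/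
open MeasureTheory Topology Filter

/-- normalized error function -/
noncomputable def EE (v : ℝ) : ℝ := (Real.sqrt Real.pi)⁻¹ * ∫ s in (0:ℝ)..v, Real.exp (-s ^ 2)

lemma EE_deriv (v : ℝ) : HasDerivAt EE ((Real.sqrt Real.pi)⁻¹ * Real.exp (-v ^ 2)) v := by
  have hc : Continuous (fun s : ℝ => Real.exp (-s ^ 2)) := by fun_prop
  exact (intervalIntegral.integral_hasDerivAt_right (hc.intervalIntegrable _ _)
    (hc.stronglyMeasurableAtFilter _ _) hc.continuousAt).const_mul _

lemma EE_zero : EE 0 = 0 := by simp [EE]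

lemma EE_top : Tendsto EE atTop (𝓝 (1 / 2)) := by
  have hi : Integrable (fun s : ℝ => Real.exp (-s ^ 2)) := by
    simpa using integrable_exp_neg_mul_sq (b := 1) one_pos
  have h := intervalIntegral_tendsto_integral_Ioi (μ := volume) 0 hi.integrableOn tendsto_id
  have hg := integral_gaussian_Ioi 1
  simp only [neg_mul, one_mul, div_one] at hg
  rw [hg] at h
  have h2 := h.const_mul (Real.sqrt Real.pi)⁻¹
  have hp : Real.sqrt Real.pi ≠ 0 := (Real.sqrt_pos.2 Real.pi_pos).ne'
  have e : (Real.sqrt Real.pi)⁻¹ * (Real.sqrt Real.pi / 2) = 1 / 2 := by field_simp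
  rw [e] at h2
  exact h2

lemma EE_neg (v : ℝ) : EE (-v) = - EE v := by
  have h := intervalIntegral.integral_comp_neg (a := 0) (b := v) (fun s : ℝ => Real.exp (-s ^ 2))
  simp only [neg_sq, neg_zero] at h
  unfold EE
  rw [h, intervalIntegral.integral_symm]
  ring

lemma EE_bot : Tendsto EE atBot (𝓝 (-(1 / 2))) := by
  have h := (EE_top.comp tendsto_neg_atBot_atTop).neg
  refine h.congr fun v => ?_
  simp [EE_neg]

lemma heat_deriv (t u : ℝ) (ht : 0 < t) :
    HasDerivAt (fun t => EE (u / (2 * Real.sqrt t))) (heat' t u) t := by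
  have hs : 0 < Real.sqrt t := Real.sqrt_pos.2 ht
  have h1 : HasDerivAt (fun t => u / (2 * Real.sqrt t))
      (-(u * (2 * (1 / (2 * Real.sqrt t)))) / (2 * Real.sqrt t) ^ 2) t := by
    have := (hasDerivAt_const t u).div ((Real.hasDerivAt_sqrt ht.ne').const_mul 2) (by positivity)
    exact this.congr_deriv (by simp)
  have h2 := (EE_deriv (u / (2 * Real.sqrt t))).comp t h1
  refine h2.congr_deriv ?_
  have e1 : Real.sqrt (4 * Real.pi * t) = 2 * Real.sqrt Real.pi * Real.sqrt t := by
    rw [Real.sqrt_mul (by positivity), Real.sqrt_mul (by norm_num)]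
    congr 2
    rw [show (4:ℝ) = 2 ^ 2 by norm_num]
    exact Real.sqrt_sq (by norm_num)
  have e2 : -(u / (2 * Real.sqrt t)) ^ 2 = -(u ^ 2) / (4 * t) := by
    rw [div_pow, mul_pow, Real.sq_sqrt ht.le]; ring
  have hp : 0 < Real.sqrt Real.pi := Real.sqrt_pos.2 Real.pi_pos
  unfold heat' heat
  rw [e1, e2, mul_pow, Real.sq_sqrt ht.le]
  field_simp
  try ring

lemma heat'_cont (u ε Λ : ℝ) (hε : 0 < ε) (hΛ : 0 < Λ) :
    IntervalIntegrable (fun t => heat' t u) volume ε Λ := by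
  apply ContinuousOn.intervalIntegrable
  intro t ht
  have ht0 : 0 < t := lt_of_lt_of_le (lt_min hε hΛ) ht.1
  have : Real.sqrt (4 * Real.pi * t) ≠ 0 := (Real.sqrt_pos.2 (by positivity)).ne'
  apply ContinuousAt.continuousWithinAt
  unfold heat' heat
  fun_prop (disch := first | assumption | positivity)

lemma heat'_int (u ε Λ : ℝ) (hε : 0 < ε) (hΛ : 0 < Λ) :
    ∫ t in ε..Λ, heat' t u = EE (u / (2 * Real.sqrt Λ)) - EE (u / (2 * Real.sqrt ε)) :=
  intervalIntegral.integral_eq_sub_of_hasDerivAt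
    (fun t ht => heat_deriv t u (lt_of_lt_of_le (lt_min hε hΛ) ht.1)) (heat'_cont u ε Λ hε hΛ)

lemma phiHeat'_eq (φ : ℝ → ℝ) (δ : ℝ) (hone : ∀ x, |x| < δ → φ x = 1) (t u : ℝ) (hu : |u| < δ) :
    phiHeat' φ t u = heat' t u := by
  have : φ =ᶠ[𝓝 u] fun _ => 1 := by
    filter_upwards [(isOpen_lt continuous_abs continuous_const).mem_nhds hu] with x hx
    exact hone x hx
  simp [phiHeat', this.deriv_eq, hone u hu]

lemma arg_top : Tendsto (fun ε : ℝ => (2 * Real.sqrt ε)⁻¹) (𝓝[>] 0) atTop := by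
  apply Tendsto.inv_tendsto_nhdsGT_zero
  refine tendsto_nhdsWithin_iff.2 ⟨?_, ?_⟩
  · have : Continuous (fun ε : ℝ => 2 * Real.sqrt ε) := by fun_prop
    have h := this.tendsto 0
    simp only [Real.sqrt_zero, mul_zero] at h
    exact h.mono_left nhdsWithin_le_nhds
  · filter_upwards [self_mem_nhdsWithin] with ε hε
    have := Real.sqrt_pos.2 hε
    simp only [Set.mem_Ioi]; positivity

lemma EE_pos_lim (u : ℝ) (hu : 0 < u) :
    Tendsto (fun ε : ℝ => EE (u / (2 * Real.sqrt ε))) (𝓝[>] 0) (𝓝 (1 / 2)) :=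
  EE_top.comp (arg_top.const_mul_atTop hu)

lemma EE_neg_lim (u : ℝ) (hu : u < 0) :
    Tendsto (fun ε : ℝ => EE (u / (2 * Real.sqrt ε))) (𝓝[>] 0) (𝓝 (-(1 / 2))) :=
  EE_bot.comp (arg_top.const_mul_atTop_of_neg hu)

lemma rhoBar_eq_s11 (φ : ℝ → ℝ) (δ : ℝ) (hone : ∀ x, |x| < δ → φ x = 1) (Λ : ℝ) (hΛ : 0 < Λ)
    (x y a b : ℝ) (h1 : |x - y| < δ) (h2 : |x + y| < δ)
    (ha : Tendsto (fun ε : ℝ => EE ((x - y) / (2 * Real.sqrt ε))) (𝓝[>] 0) (𝓝 a))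
    (hb : Tendsto (fun ε : ℝ => EE ((x + y) / (2 * Real.sqrt ε))) (𝓝[>] 0) (𝓝 b)) :
    rhoBar φ Λ x y = -(1 / 2) * ((EE ((x - y) / (2 * Real.sqrt Λ)) - a) +
      (EE ((x + y) / (2 * Real.sqrt Λ)) - b)) := by
  apply Tendsto.limUnder_eq
  refine (((ha.const_sub _).add (hb.const_sub _)).const_mul (-(1 / 2))).congr' ?_
  filter_upwards [self_mem_nhdsWithin] with ε hε
  unfold rho
  simp only [phiHeat'_eq φ δ hone _ _ h1, phiHeat'_eq φ δ hone _ _ h2]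
  rw [intervalIntegral.integral_add (heat'_cont _ _ _ hε hΛ) (heat'_cont _ _ _ hε hΛ),
    heat'_int _ _ _ hε hΛ, heat'_int _ _ _ hε hΛ]

lemma corner (φ : ℝ → ℝ) (δ : ℝ) (hδ : 0 < δ) (hone : ∀ x, |x| < δ → φ x = 1) (Λ : ℝ)
    (hΛ : 0 < Λ) (S : Set (ℝ × ℝ)) (a b : ℝ)
    (ha : ∀ p ∈ S, Tendsto (fun ε : ℝ => EE ((p.1 - p.2) / (2 * Real.sqrt ε))) (𝓝[>] 0) (𝓝 a))
    (hb : ∀ p ∈ S, Tendsto (fun ε : ℝ => EE ((p.1 + p.2) / (2 * Real.sqrt ε))) (𝓝[>] 0) (𝓝 b)) :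
    Tendsto (fun p : ℝ × ℝ => rhoBar φ Λ p.1 p.2) (𝓝[S] ((0 : ℝ), (0 : ℝ)))
      (𝓝 ((a + b) / 2)) := by
  have hE : Continuous EE := continuous_iff_continuousAt.2 fun v => (EE_deriv v).continuousAt
  have hc : Continuous (fun p : ℝ × ℝ => -(1 / 2) * ((EE ((p.1 - p.2) / (2 * Real.sqrt Λ)) - a) +
      (EE ((p.1 + p.2) / (2 * Real.sqrt Λ)) - b))) := by fun_prop
  have h := hc.tendsto (0, 0)
  simp only [sub_zero, add_zero, zero_div, EE_zero] at h
  rw [show -(1 / 2) * (0 - a + (0 - b)) = (a + b) / 2 by ring] at h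
  refine (h.mono_left nhdsWithin_le_nhds).congr' ?_
  have o1 : {p : ℝ × ℝ | |p.1 - p.2| < δ} ∈ 𝓝 ((0 : ℝ), (0 : ℝ)) :=
    (isOpen_lt (by fun_prop) (by fun_prop)).mem_nhds (by simpa using hδ)
  have o2 : {p : ℝ × ℝ | |p.1 + p.2| < δ} ∈ 𝓝 ((0 : ℝ), (0 : ℝ)) :=
    (isOpen_lt (by fun_prop) (by fun_prop)).mem_nhds (by simpa using hδ)
  filter_upwards [self_mem_nhdsWithin, nhdsWithin_le_nhds o1, nhdsWithin_le_nhds o2] with p hp p1 p2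
  exact (rhoBar_eq_s11 φ δ hone Λ hΛ p.1 p.2 a b p1 p2 (ha p hp) (hb p hp)).symm

/-- Corner values of the extended propagator kernel: the limit of `ρ̄_Λ` at `(0, 0)`
from the sector `{0 ≤ x < y}` is `0`, and from the sector `{0 ≤ y < x}` is `1/2`;
independently of `Λ` and of the cutoff `φ`. -/
theorem stmt11 (φ : ℝ → ℝ) (hφ : ContDiff ℝ (⊤ : ℕ∞) φ) (hsupp : HasCompactSupport φ)
    (heven : ∀ x, φ (-x) = φ x) (δ : ℝ) (hδ : 0 < δ) (hone : ∀ x, |x| < δ → φ x = 1)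
    (Λ : ℝ) (hΛ : 0 < Λ) :
    Tendsto (fun p : ℝ × ℝ => rhoBar φ Λ p.1 p.2)
      (𝓝[{p : ℝ × ℝ | 0 ≤ p.1 ∧ p.1 < p.2}] ((0 : ℝ), (0 : ℝ))) (𝓝 0) ∧
    Tendsto (fun p : ℝ × ℝ => rhoBar φ Λ p.1 p.2)
      (𝓝[{p : ℝ × ℝ | 0 ≤ p.2 ∧ p.2 < p.1}] ((0 : ℝ), (0 : ℝ))) (𝓝 (1 / 2)) := by
  constructor
  · have h := corner φ δ hδ hone Λ hΛ {p : ℝ × ℝ | 0 ≤ p.1 ∧ p.1 < p.2} (-(1 / 2)) (1 / 2)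
      (fun p hp => EE_neg_lim _ (by linarith [hp.1, hp.2]))
      (fun p hp => EE_pos_lim _ (by linarith [hp.1, hp.2]))
    simpa using h
  · have h := corner φ δ hδ hone Λ hΛ {p : ℝ × ℝ | 0 ≤ p.2 ∧ p.2 < p.1} (1 / 2) (1 / 2)
      (fun p hp => EE_pos_lim _ (by linarith [hp.1, hp.2]))
      (fun p hp => EE_pos_lim _ (by linarith [hp.1, hp.2]))
    rw [show ((1:ℝ) / 2 + 1 / 2) / 2 = 1 / 2 by norm_num] at h
    exact h
end
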